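/- arXiv:2603.01173 — 6 statements merged into one kernel-verified Lean document; each statement's English description precedes it below -/
import Mathlib

section
/- (Composition of Lemmas 4.1 and 4.2.) Let a > 0, h > 0, Δt > 0, 0 < K, and let d(t), v_ℓ(t+Δt), v_h(t+Δt), v̂⁻ be real numbers with D := d(t) + (v_ℓ(t+Δt) − v_h(t+Δt))·Δt > 0, and set v_thr := a·(−h + √(h² + (2/a)·D)). If the measurement z satisfies z > (v_thr − (1 − K)·v̂⁻)/K, then the Kalman-updated estimate v̂⁺ := v̂⁻ + K·(z − v̂⁻) satisfies v̂⁺ > v_thr, and consequently the predicted next-step gap violates the safe-distance constraint evaluated at v̂⁺: D < h·v̂⁺ + (v̂⁺)²/(2a), provided v̂⁺ ≥ 0. -/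
/-- Composition of Lemmas 4.1 and 4.2: if the (possibly spoofed) measurement
exceeds `(v_thr − (1−K)·v̂⁻)/K`, then the Kalman-updated estimate
`v̂⁺ := v̂⁻ + K·(z − v̂⁻)` exceeds the threshold `v_thr`, and, provided
`v̂⁺ ≥ 0`, the predicted next-step gap `D` violates the safe-distance
constraint evaluated at `v̂⁺`. -/
theorem stmt_5 (a h Δt K d vl vh vminus z : ℝ)
    (ha : 0 < a) (hh : 0 < h) (hΔt : 0 < Δt) (hK : 0 < K)
    (hD : 0 < d + (vl - vh) * Δt)
    (hz : z > (a * (-h + Real.sqrt (h ^ 2 + (2 / a) * (d + (vl - vh) * Δt)))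
              - (1 - K) * vminus) / K) :
    vminus + K * (z - vminus)
        > a * (-h + Real.sqrt (h ^ 2 + (2 / a) * (d + (vl - vh) * Δt)))
      ∧ (0 ≤ vminus + K * (z - vminus) →
          d + (vl - vh) * Δt
            < h * (vminus + K * (z - vminus))
              + (vminus + K * (z - vminus)) ^ 2 / (2 * a)) := by
  have h1 : vminus + K * (z - vminus)
        > a * (-h + Real.sqrt (h ^ 2 + (2 / a) * (d + (vl - vh) * Δt))) := by
    have := (div_lt_iff₀ hK).1 hz
    linarith
  refine ⟨h1, fun _ => ?_⟩
  generalize vminus + K * (z - vminus) = v at *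
  generalize d + (vl - vh) * Δt = D at *
  have hnn : 0 ≤ h ^ 2 + (2 / a) * D := by positivity
  have hs := Real.sq_sqrt hnn
  have hs0 := Real.sqrt_nonneg (h ^ 2 + (2 / a) * D)
  generalize Real.sqrt (h ^ 2 + (2 / a) * D) = s at *
  have h2 : a * s < v + a * h := by linarith
  have h3 : (a * s) ^ 2 < (v + a * h) ^ 2 :=
    pow_lt_pow_left₀ h2 (by positivity) (by norm_num)
  have h4 : (a * s) ^ 2 = a ^ 2 * h ^ 2 + 2 * a * D := by
    rw [mul_pow, hs]
    field_simp
  have h5 : h * v + v ^ 2 / (2 * a) = (2 * a * h * v + v ^ 2) / (2 * a) := by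
    field_simp
  rw [h5, lt_div_iff₀ (by positivity)]
  nlinarith
end

section
/- (Theorem 6.1, part A: braking-distance safety at detection.) Let a > 0, h > 0, Δt > 0, N, M ∈ ℕ with M ≤ N and N·Δt ≤ h, and let d, v_h, v_ℓ : ℕ → ℝ satisfy d(k+1) = d(k) + (v_ℓ(k+1) − v_h(k+1))·Δt for all k, with v_ℓ(k) ≥ 0 for all k. Suppose: (i) there is v̄ with 0 ≤ v̄ and v_h(j) ≤ v̄ for all j = 1, …, M, and v̄ ≤ v_h(0); (ii) d(0) ≥ h·v_h(0) + v_h(0)²/(2a); and (iii) v_h(M) ≥ 0. Then d(M) ≥ v_h(M)²/(2a). -/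
/-- Theorem 6.1, part A (braking-distance safety at detection): under the gap
recursion, bounded detection delay (`M ≤ N`, `N·Δt ≤ h`), nonnegative lead
speed, a host-speed upper bound `v̄ ≤ v_h(0)` over the detection window, a safe
initial gap `d(0) ≥ h·v_h(0) + v_h(0)²/(2a)`, and `v_h(M) ≥ 0`, the gap at
detection satisfies `d(M) ≥ v_h(M)²/(2a)`. -/
theorem stmt_9 (a h Δt : ℝ) (N M : ℕ) (d vh vl : ℕ → ℝ) (vbar : ℝ)
    (ha : 0 < a) (hh : 0 < h) (hΔt : 0 < Δt)
    (hMN : M ≤ N) (hNh : (N : ℝ) * Δt ≤ h)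
    (hrec : ∀ k, d (k + 1) = d k + (vl (k + 1) - vh (k + 1)) * Δt)
    (hvl : ∀ k, 0 ≤ vl k)
    (hvbar0 : 0 ≤ vbar) (hbound : ∀ j, 1 ≤ j → j ≤ M → vh j ≤ vbar)
    (hvbar : vbar ≤ vh 0)
    (hsafe : d 0 ≥ h * vh 0 + (vh 0) ^ 2 / (2 * a))
    (hvM : 0 ≤ vh M) :
    d M ≥ (vh M) ^ 2 / (2 * a) := by
  have key : ∀ k : ℕ, k ≤ M → d 0 - (k : ℝ) * Δt * vbar ≤ d k := by
    intro k
    induction k with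
    | zero => intro _; simp
    | succ k ih =>
      intro hk
      have h1 := ih (by omega)
      have h2 := hbound (k + 1) (by omega) hk
      have h3 : -vbar * Δt ≤ (vl (k + 1) - vh (k + 1)) * Δt :=
        mul_le_mul_of_nonneg_right (by linarith [hvl (k + 1)]) hΔt.le
      rw [hrec k]
      push_cast
      linarith
  have h1 := key M le_rfl
  have hM : vh M ≤ vh 0 := by
    rcases Nat.eq_zero_or_pos M with h0 | h0
    · rw [h0]
    · exact (hbound M h0 le_rfl).trans hvbar
  have h2 : (M : ℝ) * Δt ≤ h :=
    (mul_le_mul_of_nonneg_right (by exact_mod_cast hMN) hΔt.le).trans hNh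
  have h3 : (M : ℝ) * Δt * vbar ≤ h * vh 0 := mul_le_mul h2 hvbar hvbar0 hh.le
  have h4 : (vh M) ^ 2 / (2 * a) ≤ (vh 0) ^ 2 / (2 * a) := by gcongr
  linarith
end

section
/- (Monotonicity of the braking margin under emergency braking.) Let a > 0, Δt > 0, and let d(t), d(t+Δt), v_h(t), v_h(t+Δt), v_ℓ(t+Δt) be real numbers satisfying v_h(t+Δt) = v_h(t) − a·Δt, d(t+Δt) = d(t) + (v_ℓ(t+Δt) − v_h(t+Δt))·Δt, and v_ℓ(t+Δt) ≥ 0. Then Φ(t+Δt) ≥ Φ(t), where Φ(s) := d(s) − v_h(s)²/(2a). -/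
/-- Monotonicity of the braking margin under emergency braking: with
`v_h(t+Δt) = v_h(t) − a·Δt`, the gap recursion, and nonnegative lead speed,
the braking margin `Φ(s) := d(s) − v_h(s)²/(2a)` does not decrease. -/
theorem stmt_11 (a Δt dt dnext vht vhnext vlnext : ℝ)
    (ha : 0 < a) (hΔt : 0 < Δt)
    (hv : vhnext = vht - a * Δt)
    (hd : dnext = dt + (vlnext - vhnext) * Δt)
    (hvl : 0 ≤ vlnext) :
    dnext - vhnext ^ 2 / (2 * a) ≥ dt - vht ^ 2 / (2 * a) := by
  have key : dnext - vhnext ^ 2 / (2 * a) - (dt - vht ^ 2 / (2 * a))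
      = vlnext * Δt + a * Δt ^ 2 / 2 := by
    subst hd
    subst hv
    field_simp
    ring
  have h : 0 ≤ vlnext * Δt + a * Δt ^ 2 / 2 := by positivity
  linarith
end

section
/- (Theorem 6.1, part B: invariance of braking-distance safety after detection.) Let a > 0, Δt > 0, and let v, d : ℕ → ℝ and ℓ : ℕ → ℝ be sequences satisfying v(k+1) = v(k) − a·Δt and d(k+1) = d(k) + (ℓ(k+1) − v(k+1))·Δt for all k, with ℓ(k) ≥ 0 for all k. If d(0) ≥ v(0)²/(2a), then for every k ∈ ℕ, d(k) ≥ v(k)²/(2a) ≥ 0; in particular the inter-vehicle gap d(k) never becomes negative, so a collision is avoided. -/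
/-- Theorem 6.1, part B (invariance of braking-distance safety after
detection): under emergency braking `v(k+1) = v(k) − a·Δt`, the gap recursion,
nonnegative lead speed, and `d(0) ≥ v(0)²/(2a)`, every step satisfies
`d(k) ≥ v(k)²/(2a) ≥ 0`; in particular the gap never becomes negative. -/
theorem stmt_12 (a Δt : ℝ) (v d ℓ : ℕ → ℝ)
    (ha : 0 < a) (hΔt : 0 < Δt)
    (hv : ∀ k, v (k + 1) = v k - a * Δt)
    (hd : ∀ k, d (k + 1) = d k + (ℓ (k + 1) - v (k + 1)) * Δt)
    (hℓ : ∀ k, 0 ≤ ℓ k)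
    (h0 : d 0 ≥ v 0 ^ 2 / (2 * a)) :
    ∀ k : ℕ, d k ≥ v k ^ 2 / (2 * a) ∧ v k ^ 2 / (2 * a) ≥ 0 := by
  intro k
  refine ⟨?_, by positivity⟩
  induction k with
  | zero => exact h0
  | succ n ih =>
    have e : (v n - a * Δt) ^ 2 / (2 * a) = v n ^ 2 / (2 * a) - v n * Δt + a * Δt ^ 2 / 2 := by
      field_simp
      ring
    have h1 : 0 ≤ ℓ (n + 1) * Δt := mul_nonneg (hℓ _) hΔt.le
    have h2 : 0 ≤ a * Δt ^ 2 := by positivity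
    rw [hd, hv, e]
    nlinarith
end

section
/- (Closed form of the braking margin after detection.) Let a > 0, Δt > 0, and let v, d : ℕ → ℝ and ℓ : ℕ → ℝ satisfy v(k+1) = v(k) − a·Δt and d(k+1) = d(k) + (ℓ(k+1) − v(k+1))·Δt for all k. Then for every k ∈ ℕ, the braking margin Φ(k) := d(k) − v(k)²/(2a) satisfies Φ(k) = Φ(0) + Σ_{j=1}^{k} ℓ(j)·Δt + k·a·Δt²/2. -/
/-- Closed form of the braking margin after detection: under emergency
braking `v(k+1) = v(k) − a·Δt` and the gap recursion, the braking margin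
`Φ(k) := d(k) − v(k)²/(2a)` satisfies
`Φ(k) = Φ(0) + Σ_{j=1}^{k} ℓ(j)·Δt + k·a·Δt²/2`. -/
theorem stmt_13 (a Δt : ℝ) (v d ℓ : ℕ → ℝ)
    (ha : 0 < a) (hΔt : 0 < Δt)
    (hv : ∀ k, v (k + 1) = v k - a * Δt)
    (hd : ∀ k, d (k + 1) = d k + (ℓ (k + 1) - v (k + 1)) * Δt) :
    ∀ k : ℕ, d k - v k ^ 2 / (2 * a)
      = (d 0 - v 0 ^ 2 / (2 * a)) + (∑ j ∈ Finset.Icc 1 k, ℓ j * Δt)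
        + (k : ℝ) * a * Δt ^ 2 / 2 := by
  intro k
  induction k with
  | zero => simp
  | succ k ih =>
    rw [Finset.sum_Icc_succ_top (by omega)]
    have hstep : d (k + 1) - v (k + 1) ^ 2 / (2 * a)
        = (d k - v k ^ 2 / (2 * a)) + ℓ (k + 1) * Δt + a * Δt ^ 2 / 2 := by
      rw [hd, hv]
      field_simp
      ring
    rw [hstep, ih]
    push_cast
    ring
end

section
/- (Theorem 6.1, full statement: IDS braking assures collision avoidance.) Let a > 0, h > 0, Δt > 0, N, M ∈ ℕ with M ≤ N and N·Δt ≤ h, and let d, v_h, v_ℓ : ℕ → ℝ be sequences satisfying d(k+1) = d(k) + (v_ℓ(k+1) − v_h(k+1))·Δt for all k, and v_ℓ(k) ≥ 0 for all k. Suppose: (i) d(0) ≥ h·v_h(0) + v_h(0)²/(2a); (ii) there is v̄ with 0 ≤ v̄ ≤ v_h(0) and v_h(j) ≤ v̄ for all j = 1, …, M; (iii) v_h(M) ≥ 0; and (iv) for all k ≥ M, v_h(k+1) = v_h(k) − a·Δt. Then for every k ≥ M, d(k) ≥ v_h(k)²/(2a) ≥ 0; in particular d(k) ≥ 0 for all k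 ≥ M, so the inter-vehicle gap never becomes negative after detection and a collision is avoided. -/
/-- Theorem 6.1, full statement (IDS braking assures collision avoidance):
under the gap recursion, nonnegative lead speed, a safe initial gap
`d(0) ≥ h·v_h(0) + v_h(0)²/(2a)`, a host-speed upper bound
`0 ≤ v̄ ≤ v_h(0)` during the detection window of length `M ≤ N` with
`N·Δt ≤ h`, `v_h(M) ≥ 0`, and emergency braking `v_h(k+1) = v_h(k) − a·Δt` for
all `k ≥ M`, we have `d(k) ≥ v_h(k)²/(2a) ≥ 0` for all `k ≥ M`; in particular
the inter-vehicle gap never becomes negative after detection. -/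
theorem stmt_14 (a h Δt : ℝ) (N M : ℕ) (d vh vl : ℕ → ℝ) (vbar : ℝ)
    (ha : 0 < a) (hh : 0 < h) (hΔt : 0 < Δt)
    (hMN : M ≤ N) (hNh : (N : ℝ) * Δt ≤ h)
    (hrec : ∀ k, d (k + 1) = d k + (vl (k + 1) - vh (k + 1)) * Δt)
    (hvl : ∀ k, 0 ≤ vl k)
    (hsafe : d 0 ≥ h * vh 0 + (vh 0) ^ 2 / (2 * a))
    (hvbar0 : 0 ≤ vbar) (hvbar1 : vbar ≤ vh 0)
    (hbound : ∀ j, 1 ≤ j → j ≤ M → vh j ≤ vbar)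
    (hvM : 0 ≤ vh M)
    (hbrake : ∀ k, M ≤ k → vh (k + 1) = vh k - a * Δt) :
    ∀ k, M ≤ k → d k ≥ (vh k) ^ 2 / (2 * a) ∧ (vh k) ^ 2 / (2 * a) ≥ 0 := by
  have hwin : ∀ j : ℕ, j ≤ M → d 0 - (j : ℝ) * (vbar * Δt) ≤ d j := by
    intro j
    induction j with
    | zero => intro _; simp
    | succ j ih =>
      intro hj
      have h1 := ih (by omega)
      have h2 := mul_le_mul_of_nonneg_right (hbound (j + 1) (by omega) hj) hΔt.le
      have h3 := mul_nonneg (hvl (j + 1)) hΔt.le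
      rw [hrec j]
      push_cast
      linarith
  have hv0 : 0 ≤ vh 0 := hvbar0.trans hvbar1
  have hM0 : vh M ≤ vh 0 := by
    rcases Nat.eq_zero_or_pos M with h0 | h0
    · rw [h0]
    · exact (hbound M h0 le_rfl).trans hvbar1
  have hMh : (M : ℝ) * Δt ≤ h := by
    have : (M : ℝ) ≤ N := by exact_mod_cast hMN
    exact (mul_le_mul_of_nonneg_right this hΔt.le).trans hNh
  have hmain : ∀ k, M ≤ k → (vh k) ^ 2 / (2 * a) ≤ d k := by
    intro k hk
    induction k, hk using Nat.le_induction with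
    | base =>
      have h1 := hwin M le_rfl
      have h2 : (M : ℝ) * Δt * vbar ≤ h * vh 0 := mul_le_mul hMh hvbar1 hvbar0 hh.le
      have h3 : (vh M) ^ 2 / (2 * a) ≤ (vh 0) ^ 2 / (2 * a) := by gcongr
      linarith
    | succ k hk ih =>
      have h3 := mul_nonneg (hvl (k + 1)) hΔt.le
      have h4 : vh k = vh (k + 1) + a * Δt := by linarith [hbrake k hk]
      have h5 : (vh k) ^ 2 / (2 * a)
          = (vh (k + 1)) ^ 2 / (2 * a) + vh (k + 1) * Δt + a * Δt ^ 2 / 2 := by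
        rw [h4]; field_simp; ring
      have h6 : 0 ≤ a * Δt ^ 2 / 2 := by positivity
      rw [hrec k]
      linarith
  intro k hk
  exact ⟨hmain k hk, by positivity⟩
end
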